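/- For every L_⊳-formula φ: φ ∈ ICK ⊕ ((p → q) → (p ⊳ q)) if and only if φ is valid on every conditional Kripke frame (X, ≤, 𝓡) satisfying R_a[x] ⊆ ↑x ∩ a for all worlds x ∈ X and all upsets a. -/

import Mathlib

/-! ## The conditional language `L_⊳` -/

/-- Formulas of the conditional language `L_⊳`, with proposition letters
indexed by the countable set `ℕ`. -/
inductive CForm : Type where
  | var : ℕ → CForm
  | bot : CForm
  | and : CForm → CForm → CForm
  | or : CForm → CForm → CForm
  | imp : CForm → CForm → CForm
  | cond : CForm → CForm → CForm

/-- `⊤ := ⊥ → ⊥`. -/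
def cTop : CForm := CForm.imp CForm.bot CForm.bot

/-- `φ ↔ ψ := (φ → ψ) ∧ (ψ → φ)`. -/
def cIff (φ ψ : CForm) : CForm := CForm.and (CForm.imp φ ψ) (CForm.imp ψ φ)

/-- Uniform substitution of formulas for proposition letters. -/
def psubst (σ : ℕ → CForm) : CForm → CForm
  | CForm.var q => σ q
  | CForm.bot => CForm.bot
  | CForm.and φ ψ => CForm.and (psubst σ φ) (psubst σ ψ)
  | CForm.or φ ψ => CForm.or (psubst σ φ) (psubst σ ψ)
  | CForm.imp φ ψ => CForm.imp (psubst σ φ) (psubst σ ψ)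
  | CForm.cond φ ψ => CForm.cond (psubst σ φ) (psubst σ ψ)

/-- The logic `ICK ⊕ Γ`: the smallest set of `L_⊳`-formulas containing an
axiomatisation of intuitionistic propositional logic, the formulas of `Γ`, the
axioms `(k_c)` and `(n_c)`, closed under uniform substitution, modus ponens and
the two congruence rules. -/
inductive ICK (Γ : Set CForm) : CForm → Prop where
  | prem {φ : CForm} : φ ∈ Γ → ICK Γ φ
  | a1 : ICK Γ (CForm.imp (CForm.and (CForm.var 0) (CForm.var 1)) (CForm.var 0))
  | a2 : ICK Γ (CForm.imp (CForm.and (CForm.var 0) (CForm.var 1)) (CForm.var 1))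
  | a3 : ICK Γ (CForm.imp (CForm.imp (CForm.var 0) (CForm.var 1))
      (CForm.imp (CForm.imp (CForm.var 0) (CForm.var 2))
        (CForm.imp (CForm.var 0) (CForm.and (CForm.var 1) (CForm.var 2)))))
  | a4 : ICK Γ (CForm.imp (CForm.var 0) (CForm.or (CForm.var 0) (CForm.var 1)))
  | a5 : ICK Γ (CForm.imp (CForm.var 1) (CForm.or (CForm.var 0) (CForm.var 1)))
  | a6 : ICK Γ (CForm.imp (CForm.imp (CForm.var 0) (CForm.var 2))
      (CForm.imp (CForm.imp (CForm.var 1) (CForm.var 2))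
        (CForm.imp (CForm.or (CForm.var 0) (CForm.var 1)) (CForm.var 2))))
  | a7 : ICK Γ (CForm.imp CForm.bot (CForm.var 0))
  | a8 : ICK Γ (CForm.imp (CForm.var 0) (CForm.imp (CForm.var 1) (CForm.var 0)))
  | a9 : ICK Γ (CForm.imp
      (CForm.imp (CForm.var 0) (CForm.imp (CForm.var 1) (CForm.var 2)))
      (CForm.imp (CForm.imp (CForm.var 0) (CForm.var 1))
        (CForm.imp (CForm.var 0) (CForm.var 2))))
  | kc : ICK Γ (cIff (CForm.cond (CForm.var 0) (CForm.and (CForm.var 1) (CForm.var 2)))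
      (CForm.and (CForm.cond (CForm.var 0) (CForm.var 1))
        (CForm.cond (CForm.var 0) (CForm.var 2))))
  | nc : ICK Γ (cIff (CForm.cond (CForm.var 0) cTop) cTop)
  | subst {φ : CForm} (σ : ℕ → CForm) : ICK Γ φ → ICK Γ (psubst σ φ)
  | mp {φ ψ : CForm} : ICK Γ (CForm.imp φ ψ) → ICK Γ φ → ICK Γ ψ
  | congL {φ ψ χ : CForm} :
      ICK Γ (cIff φ ψ) → ICK Γ (cIff (CForm.cond φ χ) (CForm.cond ψ χ))
  | congR {φ ψ χ : CForm} :
      ICK Γ (cIff φ ψ) → ICK Γ (cIff (CForm.cond χ φ) (CForm.cond χ ψ))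

/-! ## Conditional Kripke frames and semantics -/

/-- `a` is an upset (upward closed set) w.r.t. the relation `le`. -/
def IsUpset {X : Type} (le : X → X → Prop) (a : Set X) : Prop :=
  ∀ ⦃x y : X⦄, le x y → x ∈ a → y ∈ a

/-- The upward closure `↑s` of a set `s` w.r.t. the relation `le`. -/
def upCl {X : Type} (le : X → X → Prop) (s : Set X) : Set X :=
  {z | ∃ y ∈ s, le y z}

/-- Truth sets of `L_⊳`-formulas, by intuitionistic Kripke semantics for the
propositional connectives, where `x ⊨ φ ⊳ ψ` iff every `y` with
`x R_{V(φ)} y` satisfies `ψ` (here `V(φ)` is the truth set of `φ`). -/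
def csat {X : Type} (le : X → X → Prop) (R : Set X → X → X → Prop)
    (V : ℕ → Set X) : CForm → Set X
  | CForm.var p => V p
  | CForm.bot => ∅
  | CForm.and φ ψ => csat le R V φ ∩ csat le R V ψ
  | CForm.or φ ψ => csat le R V φ ∪ csat le R V ψ
  | CForm.imp φ ψ => {x | ∀ y, le x y → y ∈ csat le R V φ → y ∈ csat le R V ψ}
  | CForm.cond φ ψ => {x | ∀ y, R (csat le R V φ) x y → y ∈ csat le R V ψ}

/-- A conditional Kripke frame: a nonempty preordered set `(X, le)` with a
family of relations `R a` (indexed by the upsets `a`) satisfying the coherence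
condition `(≤ ∘ R_a) ⊆ (R_a ∘ ≤)`. -/
structure CondFrame where
  X : Type
  ne : Nonempty X
  le : X → X → Prop
  le_refl : ∀ x, le x x
  le_trans : ∀ ⦃x y z⦄, le x y → le y z → le x z
  R : Set X → X → X → Prop
  coh : ∀ a : Set X, IsUpset le a →
    ∀ ⦃x y z⦄, le x y → R a y z → ∃ w, R a x w ∧ le w z

/-- Validity on a conditional Kripke frame: truth at every world under every
valuation of the proposition letters by upsets. -/
def CondFrame.valid (F : CondFrame) (φ : CForm) : Prop :=
  ∀ V : ℕ → Set F.X, (∀ p, IsUpset F.le (V p)) → ∀ x, x ∈ csat F.le F.R V φ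

/-! ## Conditional Heyting algebras -/

/-- A conditional Heyting algebra: a Heyting algebra with a binary operation
`cond` (written `⊳` in the paper) preserving finite meets in its second
argument. -/
class CondHeyting (A : Type) extends HeytingAlgebra A where
  cond : A → A → A
  cond_inf : ∀ a b c : A, cond a (b ⊓ c) = cond a b ⊓ cond a c
  cond_top : ∀ a : A, cond a ⊤ = ⊤

/-- Evaluation of an `L_⊳`-formula in a conditional Heyting algebra under an
assignment `σ` of the proposition letters. -/
def evalCHA {A : Type} [CondHeyting A] (σ : ℕ → A) : CForm → A
  | CForm.var p => σ p
  | CForm.bot => ⊥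
  | CForm.and φ ψ => evalCHA σ φ ⊓ evalCHA σ ψ
  | CForm.or φ ψ => evalCHA σ φ ⊔ evalCHA σ ψ
  | CForm.imp φ ψ => evalCHA σ φ ⇨ evalCHA σ ψ
  | CForm.cond φ ψ => CondHeyting.cond (evalCHA σ φ) (evalCHA σ ψ)

/-- A formula is satisfied in a conditional Heyting algebra if it evaluates to
`⊤` under every assignment. -/
def chaSat (A : Type) [CondHeyting A] (φ : CForm) : Prop :=
  ∀ σ : ℕ → A, evalCHA σ φ = ⊤

/-- A prime filter: a proper, nonempty, upward closed subset, closed under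
binary meets, such that `a ⊔ b ∈ x` implies `a ∈ x` or `b ∈ x`. -/
def IsPrimeFilter {A : Type} [Lattice A] (x : Set A) : Prop :=
  x.Nonempty ∧ x ≠ Set.univ ∧
  (∀ ⦃a b : A⦄, a ∈ x → a ≤ b → b ∈ x) ∧
  (∀ ⦃a b : A⦄, a ∈ x → b ∈ x → a ⊓ b ∈ x) ∧
  (∀ ⦃a b : A⦄, a ⊔ b ∈ x → a ∈ x ∨ b ∈ x)

/-! ## General conditional frames -/

/-- A general conditional frame `(X, ≤, 𝓡, A)`. -/
structure GenFrame where
  X : Type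
  le : X → X → Prop
  le_refl : ∀ x, le x x
  le_trans : ∀ ⦃x y z⦄, le x y → le y z → le x z
  le_antisymm : ∀ ⦃x y⦄, le x y → le y x → x = y
  A : Set (Set X)
  upA : ∀ a ∈ A, IsUpset le a
  univ_mem : Set.univ ∈ A
  empty_mem : ∅ ∈ A
  inter_mem : ∀ a ∈ A, ∀ b ∈ A, a ∩ b ∈ A
  union_mem : ∀ a ∈ A, ∀ b ∈ A, a ∪ b ∈ A
  R : Set X → X → X → Prop
  himp_mem : ∀ a ∈ A, ∀ b ∈ A, {x | ∀ y, le x y → y ∈ a → y ∈ b} ∈ A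
  cimp_mem : ∀ a ∈ A, ∀ b ∈ A, {x | ∀ y, R a x y → y ∈ b} ∈ A
  coh : ∀ a ∈ A, ∀ ⦃x y z⦄, le x y → R a y z → ∃ w, R a x w ∧ le w z

/-- The carrier of the complex algebra of a general frame: the admissible
upsets. -/
def GenFrame.AUp (G : GenFrame) : Type := {a : Set G.X // a ∈ G.A}

instance GenFrame.instLatticeAUp (G : GenFrame) : Lattice G.AUp where
  le a b := a.val ⊆ b.val
  le_refl a := subset_rfl
  le_trans a b c h h' := Set.Subset.trans h h'
  le_antisymm a b h h' := Subtype.ext (subset_antisymm h h')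
  sup a b := ⟨a.val ∪ b.val, G.union_mem _ a.2 _ b.2⟩
  le_sup_left a b := Set.subset_union_left
  le_sup_right a b := Set.subset_union_right
  sup_le a b c h h' := Set.union_subset h h'
  inf a b := ⟨a.val ∩ b.val, G.inter_mem _ a.2 _ b.2⟩
  inf_le_left a b := Set.inter_subset_left
  inf_le_right a b := Set.inter_subset_right
  le_inf a b c h h' := Set.subset_inter h h'

instance GenFrame.instHeytingAUp (G : GenFrame) : HeytingAlgebra G.AUp :=
  { GenFrame.instLatticeAUp G with
    top := ⟨Set.univ, G.univ_mem⟩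
    le_top := fun a => Set.subset_univ _
    bot := ⟨∅, G.empty_mem⟩
    bot_le := fun a => Set.empty_subset _
    himp := fun a b => ⟨{x | ∀ y, G.le x y → y ∈ a.val → y ∈ b.val},
      G.himp_mem _ a.2 _ b.2⟩
    compl := fun a => ⟨{x | ∀ y, G.le x y → y ∈ a.val → y ∈ (∅ : Set G.X)},
      G.himp_mem _ a.2 _ G.empty_mem⟩
    le_himp_iff := by
      intro a b c
      show a.val ⊆ {x | ∀ y, G.le x y → y ∈ b.val → y ∈ c.val} ↔
        a.val ∩ b.val ⊆ c.val
      constructor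
      · rintro h x ⟨hxa, hxb⟩
        exact h hxa x (G.le_refl x) hxb
      · intro h x hxa y hle hyb
        exact h ⟨G.upA a.val a.2 hle hxa, hyb⟩
    himp_bot := fun a => rfl }

/-- The complex algebra `AUp(G)` of a general frame `G` is a conditional
Heyting algebra, with `a ⊳ b := {x | R_a[x] ⊆ b}`. -/
instance GenFrame.instCondHeytingAUp (G : GenFrame) : CondHeyting G.AUp where
  cond a b := ⟨{x | ∀ y, G.R a.val x y → y ∈ b.val}, G.cimp_mem _ a.2 _ b.2⟩
  cond_inf a b c := Subtype.ext (Set.ext fun x => by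
    show (∀ y, G.R a.val x y → y ∈ b.val ∩ c.val) ↔
      (∀ y, G.R a.val x y → y ∈ b.val) ∧ (∀ y, G.R a.val x y → y ∈ c.val)
    constructor
    · intro h
      exact ⟨fun y hy => (h y hy).1, fun y hy => (h y hy).2⟩
    · rintro ⟨h1, h2⟩ y hy
      exact ⟨h1 y hy, h2 y hy⟩)
  cond_top a := Subtype.ext (Set.ext fun x => by
    show (∀ y, G.R a.val x y → y ∈ (Set.univ : Set G.X)) ↔
      x ∈ (Set.univ : Set G.X)
    exact ⟨fun _ => trivial, fun _ y _ => trivial⟩)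

/-! ## Conditional Esakia spaces -/

/-- A conditional Esakia space: an Esakia space `(X, le, top)` together with a
family of relations `R a` indexed by the clopen upsets `a`, such that
`{x | R_a[x] ⊆ b}` is clopen for clopen upsets `a, b`, each `R_a[x]` is
closed, and `(≤ ∘ R_a ∘ ≤) = R_a`. -/
structure CondEsakia where
  X : Type
  ne : Nonempty X
  le : X → X → Prop
  le_refl : ∀ x, le x x
  le_trans : ∀ ⦃x y z⦄, le x y → le y z → le x z
  le_antisymm : ∀ ⦃x y⦄, le x y → le y x → x = y
  top : TopologicalSpace X
  compact : @CompactSpace X top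
  sep : ∀ x y : X, ¬ le x y →
    ∃ a : Set X, @IsClopen X top a ∧ IsUpset le a ∧ x ∈ a ∧ y ∉ a
  down_clopen : ∀ a : Set X, @IsClopen X top a →
    @IsClopen X top {x | ∃ y ∈ a, le x y}
  R : Set X → X → X → Prop
  box_clopen : ∀ a b : Set X, @IsClopen X top a → IsUpset le a →
    @IsClopen X top b → IsUpset le b →
    @IsClopen X top {x | ∀ y, R a x y → y ∈ b}
  coh : ∀ a : Set X, @IsClopen X top a → IsUpset le a →
    ∀ x z : X, (∃ x' y', le x x' ∧ R a x' y' ∧ le y' z) ↔ R a x z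
  im_closed : ∀ a : Set X, @IsClopen X top a → IsUpset le a →
    ∀ x : X, @IsClosed X top {y | R a x y}

/-- `a` is a clopen upset of the conditional Esakia space `S`. -/
def CondEsakia.ClopUp (S : CondEsakia) (a : Set S.X) : Prop :=
  @IsClopen S.X S.top a ∧ IsUpset S.le a

/-- Validity on a conditional Esakia space: truth at every world under every
valuation of the proposition letters by clopen upsets. -/
def CondEsakia.valid (S : CondEsakia) (φ : CForm) : Prop :=
  ∀ V : ℕ → Set S.X, (∀ p, S.ClopUp (V p)) → ∀ x, x ∈ csat S.le S.R V φ

/-- The family of relations of the empty fill-in `κ_∅(S)`: it agrees with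
`S.R` on clopen upsets and is empty on all other sets. -/
def CondEsakia.emptyFill (S : CondEsakia) : Set S.X → S.X → S.X → Prop :=
  fun a x y => S.ClopUp a ∧ S.R a x y

/-- Validity on the empty fill-in `κ_∅(S)`, a conditional Kripke frame:
truth at every world under every valuation by (arbitrary) upsets. -/
def CondEsakia.emptyFillValid (S : CondEsakia) (φ : CForm) : Prop :=
  ∀ V : ℕ → Set S.X, (∀ p, IsUpset S.le (V p)) →
    ∀ x, x ∈ csat S.le S.emptyFill V φ

/-! ## The modal language `L_□` -/

/-- Formulas of the modal language `L_□`. -/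
inductive MForm : Type where
  | var : ℕ → MForm
  | bot : MForm
  | and : MForm → MForm → MForm
  | or : MForm → MForm → MForm
  | imp : MForm → MForm → MForm
  | box : MForm → MForm

/-- The translation `(−)^p : L_□ → L_⊳`: it fixes proposition letters, `⊥`,
`∧`, `∨`, `→`, and sends `□ψ` to `p ⊳ ψ^p`. -/
def MForm.transl (p : ℕ) : MForm → CForm
  | MForm.var q => CForm.var q
  | MForm.bot => CForm.bot
  | MForm.and φ ψ => CForm.and (φ.transl p) (ψ.transl p)
  | MForm.or φ ψ => CForm.or (φ.transl p) (ψ.transl p)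
  | MForm.imp φ ψ => CForm.imp (φ.transl p) (ψ.transl p)
  | MForm.box φ => CForm.cond (CForm.var p) (φ.transl p)

/-- The proposition letter `p` occurs (as a subformula) in a modal formula. -/
def MForm.occurs (p : ℕ) : MForm → Prop
  | MForm.var q => p = q
  | MForm.bot => False
  | MForm.and φ ψ => φ.occurs p ∨ ψ.occurs p
  | MForm.or φ ψ => φ.occurs p ∨ ψ.occurs p
  | MForm.imp φ ψ => φ.occurs p ∨ ψ.occurs p
  | MForm.box φ => φ.occurs p

/-- Truth sets of `L_□`-formulas in a modal model, by intuitionistic Kripke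
semantics with `x ⊨ □φ` iff every `y` with `x R y` satisfies `φ`. -/
def msat {X : Type} (le : X → X → Prop) (R : X → X → Prop)
    (V : ℕ → Set X) : MForm → Set X
  | MForm.var p => V p
  | MForm.bot => ∅
  | MForm.and φ ψ => msat le R V φ ∩ msat le R V ψ
  | MForm.or φ ψ => msat le R V φ ∪ msat le R V ψ
  | MForm.imp φ ψ => {x | ∀ y, le x y → y ∈ msat le R V φ → y ∈ msat le R V ψ}
  | MForm.box φ => {x | ∀ y, R x y → y ∈ msat le R V φ}

/-- A modal Esakia space: an Esakia space with a relation `R` such that each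
`R[x]` is closed and `R = (≤ ∘ R ∘ ≤)`. -/
structure ModalEsakia where
  X : Type
  ne : Nonempty X
  le : X → X → Prop
  le_refl : ∀ x, le x x
  le_trans : ∀ ⦃x y z⦄, le x y → le y z → le x z
  le_antisymm : ∀ ⦃x y⦄, le x y → le y x → x = y
  top : TopologicalSpace X
  compact : @CompactSpace X top
  sep : ∀ x y : X, ¬ le x y →
    ∃ a : Set X, @IsClopen X top a ∧ IsUpset le a ∧ x ∈ a ∧ y ∉ a
  down_clopen : ∀ a : Set X, @IsClopen X top a →
    @IsClopen X top {x | ∃ y ∈ a, le x y}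
  R : X → X → Prop
  im_closed : ∀ x : X, @IsClosed X top {y | R x y}
  coh : ∀ x z : X, (∃ x' y', le x x' ∧ R x' y' ∧ le y' z) ↔ R x z

/-- Validity on a modal Esakia space: truth everywhere under every valuation
by clopen upsets. -/
def ModalEsakia.valid (M : ModalEsakia) (φ : MForm) : Prop :=
  ∀ V : ℕ → Set M.X, (∀ p, @IsClopen M.X M.top (V p) ∧ IsUpset M.le (V p)) →
    ∀ x, x ∈ msat M.le M.R V φ

/-- Validity on the underlying modal frame `κ(M)` of a modal Esakia space:
truth everywhere under every valuation by arbitrary upsets. -/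
def ModalEsakia.frameValid (M : ModalEsakia) (φ : MForm) : Prop :=
  ∀ V : ℕ → Set M.X, (∀ p, IsUpset M.le (V p)) → ∀ x, x ∈ msat M.le M.R V φ

/-- An `L_□`-formula is d-persistent if its validity on a modal Esakia space
implies its validity on the underlying modal frame. -/
def DPersistent (φ : MForm) : Prop :=
  ∀ M : ModalEsakia, M.valid φ → M.frameValid φ

/-- The strength axiom `(str)  (p → q) → (p ⊳ q)`. -/
def axStr : CForm :=
  CForm.imp (CForm.imp (CForm.var 0) (CForm.var 1))
    (CForm.cond (CForm.var 0) (CForm.var 1))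

/-! ## Soundness -/

theorem csat_upset (F : CondFrame) (V : ℕ → Set F.X) (hV : ∀ p, IsUpset F.le (V p)) :
    ∀ φ, IsUpset F.le (csat F.le F.R V φ) := by
  intro φ
  induction φ with
  | var p => exact hV p
  | bot => intro x y _ h; exact h
  | and φ ψ h1 h2 => intro x y h hx; exact ⟨h1 h hx.1, h2 h hx.2⟩
  | or φ ψ h1 h2 => intro x y h hx; exact hx.imp (h1 h) (h2 h)
  | imp φ ψ h1 h2 => intro x y h hx z hz; exact hx z (F.le_trans h hz)
  | cond φ ψ h1 h2 =>
    intro x y h hx z hz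
    obtain ⟨w, hw, hwz⟩ := F.coh _ h1 h hz
    exact h2 hwz (hx w hw)

theorem csat_psubst {X : Type} (le : X → X → Prop) (R : Set X → X → X → Prop)
    (V : ℕ → Set X) (σ : ℕ → CForm) (φ : CForm) :
    csat le R V (psubst σ φ) = csat le R (fun p => csat le R V (σ p)) φ := by
  induction φ with
  | var p => rfl
  | bot => rfl
  | and φ ψ h1 h2 => simp only [psubst, csat, h1, h2]
  | or φ ψ h1 h2 => simp only [psubst, csat, h1, h2]
  | imp φ ψ h1 h2 => simp only [psubst, csat, h1, h2]
  | cond φ ψ h1 h2 => simp only [psubst, csat, h1, h2]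

theorem csat_eq_of_iff (F : CondFrame) (V : ℕ → Set F.X) {φ ψ : CForm}
    (h : ∀ x, x ∈ csat F.le F.R V (cIff φ ψ)) :
    csat F.le F.R V φ = csat F.le F.R V ψ := by
  ext x
  exact ⟨(h x).1 x (F.le_refl x), (h x).2 x (F.le_refl x)⟩

theorem csat_iff_of_eq (F : CondFrame) (V : ℕ → Set F.X) {φ ψ : CForm}
    (h : csat F.le F.R V φ = csat F.le F.R V ψ) (x : F.X) :
    x ∈ csat F.le F.R V (cIff φ ψ) := by
  refine ⟨fun y _ hy => ?_, fun y _ hy => ?_⟩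
  · rw [← h]; exact hy
  · rw [h]; exact hy

theorem str_sound {φ : CForm} (h : ICK {axStr} φ) (F : CondFrame)
    (hF : ∀ (x : F.X) (a : Set F.X), IsUpset F.le a →
          ∀ y, F.R a x y → F.le x y ∧ y ∈ a) : F.valid φ := by
  induction h with
  | prem h =>
    cases h
    intro V hV x y hxy hy z hz
    obtain ⟨h1, h2⟩ := hF y (V 0) (hV 0) z hz
    exact hy z h1 h2
  | a1 => intro V hV x y hxy hy; exact hy.1
  | a2 => intro V hV x y hxy hy; exact hy.2
  | a3 =>
    intro V hV x y hxy hy z hyz hz w hzw hw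
    exact ⟨hy w (F.le_trans hyz hzw) hw, hz w hzw hw⟩
  | a4 => intro V hV x y hxy hy; exact Or.inl hy
  | a5 => intro V hV x y hxy hy; exact Or.inr hy
  | a6 =>
    intro V hV x y hxy hy z hyz hz w hzw hw
    exact hw.elim (hy w (F.le_trans hyz hzw)) (hz w hzw)
  | a7 => intro V hV x y hxy hy; exact hy.elim
  | a8 => intro V hV x y hxy hy z hyz _; exact hV 0 hyz hy
  | a9 =>
    intro V hV x y hxy hy z hyz hz w hzw hw
    exact hy w (F.le_trans hyz hzw) hw w (F.le_refl w) (hz w hzw hw)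
  | kc =>
    intro V hV x
    exact ⟨fun y _ hy => ⟨fun z hz => (hy z hz).1, fun z hz => (hy z hz).2⟩,
      fun y _ hy z hz => ⟨hy.1 z hz, hy.2 z hz⟩⟩
  | nc =>
    intro V hV x
    exact ⟨fun y _ hy z _ hz => hz, fun y _ hy z hz w _ hw => hw⟩
  | subst σ _ ih =>
    intro V hV x
    rw [csat_psubst]
    exact ih _ (fun p => csat_upset F V hV (σ p)) x
  | mp _ _ ih1 ih2 =>
    intro V hV x
    exact ih1 V hV x x (F.le_refl x) (ih2 V hV x)
  | congL _ ih =>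
    intro V hV x
    apply csat_iff_of_eq
    simp only [csat, csat_eq_of_iff F V (ih V hV)]
  | congR _ ih =>
    intro V hV x
    apply csat_iff_of_eq
    simp only [csat, csat_eq_of_iff F V (ih V hV)]

/-! ## Derivations -/

def sub3 (a b c : CForm) : ℕ → CForm
  | 0 => a
  | 1 => b
  | _ => c

abbrev Prv (φ : CForm) : Prop := ICK {axStr} φ

theorem prv_fst (a b : CForm) : Prv (.imp (.and a b) a) := ICK.subst (sub3 a b b) ICK.a1
theorem prv_snd (a b : CForm) : Prv (.imp (.and a b) b) := ICK.subst (sub3 a b b) ICK.a2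
theorem prv_pair (a b c : CForm) :
    Prv (.imp (.imp a b) (.imp (.imp a c) (.imp a (.and b c)))) :=
  ICK.subst (sub3 a b c) ICK.a3
theorem prv_inl (a b : CForm) : Prv (.imp a (.or a b)) := ICK.subst (sub3 a b b) ICK.a4
theorem prv_inr (a b : CForm) : Prv (.imp b (.or a b)) := ICK.subst (sub3 a b b) ICK.a5
theorem prv_elim (a b c : CForm) :
    Prv (.imp (.imp a c) (.imp (.imp b c) (.imp (.or a b) c))) :=
  ICK.subst (sub3 a b c) ICK.a6
theorem prv_efq (a : CForm) : Prv (.imp .bot a) := ICK.subst (sub3 a a a) ICK.a7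
theorem prv_k (a b : CForm) : Prv (.imp a (.imp b a)) := ICK.subst (sub3 a b b) ICK.a8
theorem prv_s (a b c : CForm) :
    Prv (.imp (.imp a (.imp b c)) (.imp (.imp a b) (.imp a c))) :=
  ICK.subst (sub3 a b c) ICK.a9
theorem prv_kc (a b c : CForm) :
    Prv (cIff (.cond a (.and b c)) (.and (.cond a b) (.cond a c))) :=
  ICK.subst (sub3 a b c) ICK.kc
theorem prv_nc (a : CForm) : Prv (cIff (.cond a cTop) cTop) :=
  ICK.subst (sub3 a a a) ICK.nc
theorem prv_str (a b : CForm) : Prv (.imp (.imp a b) (.cond a b)) :=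
  ICK.subst (sub3 a b b) (ICK.prem (Set.mem_singleton axStr))

theorem prv_id (a : CForm) : Prv (.imp a a) :=
  ((prv_s a (.imp a a) a).mp (prv_k _ _)).mp (prv_k _ _)

theorem prv_const {a : CForm} (b : CForm) (h : Prv a) : Prv (.imp b a) := (prv_k _ _).mp h

theorem prv_top : Prv cTop := prv_id _

theorem prv_comp {a b c : CForm} (h1 : Prv (.imp a b)) (h2 : Prv (.imp b c)) :
    Prv (.imp a c) :=
  ((prv_s a b c).mp (prv_const a h2)).mp h1

theorem prv_pairing {a b c : CForm} (h1 : Prv (.imp a b)) (h2 : Prv (.imp a c)) :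
    Prv (.imp a (.and b c)) := ((prv_pair a b c).mp h1).mp h2

theorem prv_and {a b : CForm} (h1 : Prv a) (h2 : Prv b) : Prv (.and a b) :=
  (prv_pairing (prv_const cTop h1) (prv_const cTop h2)).mp prv_top

theorem prv_iff_mp {a b : CForm} (h : Prv (cIff a b)) : Prv (.imp a b) :=
  (prv_fst _ _).mp h

theorem prv_iff_mpr {a b : CForm} (h : Prv (cIff a b)) : Prv (.imp b a) :=
  (prv_snd _ _).mp h

theorem prv_cond_nec (a : CForm) {b : CForm} (h : Prv b) : Prv (.cond a b) := by
  have h1 : Prv (cIff b cTop) := prv_and (prv_const _ prv_top) (prv_const _ h)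
  have h2 : Prv (cIff (.cond a b) (.cond a cTop)) := ICK.congR h1
  exact (prv_iff_mpr h2).mp ((prv_iff_mpr (prv_nc a)).mp prv_top)

theorem prv_cond_mono (a : CForm) {b c : CForm} (h : Prv (.imp b c)) :
    Prv (.imp (.cond a b) (.cond a c)) := by
  have h1 : Prv (cIff b (.and b c)) := prv_and (prv_pairing (prv_id b) h) (prv_fst _ _)
  have h2 : Prv (cIff (.cond a b) (.cond a (.and b c))) := ICK.congR h1
  exact prv_comp (prv_comp (prv_iff_mp h2) (prv_iff_mp (prv_kc a b c))) (prv_snd _ _)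

theorem prv_ev (b c : CForm) : Prv (.imp (.and (.imp b c) b) c) :=
  ((prv_s _ b c).mp (prv_fst _ _)).mp (prv_snd _ _)

/-! ## Theories -/

structure Thy (T : Set CForm) : Prop where
  thm : ∀ {a}, Prv a → a ∈ T
  mp : ∀ {a b}, CForm.imp a b ∈ T → a ∈ T → b ∈ T

theorem Thy.and_mem {T : Set CForm} (h : Thy T) {a b : CForm} (ha : a ∈ T) (hb : b ∈ T) :
    CForm.and a b ∈ T :=
  h.mp (h.mp (h.mp (h.thm (prv_pair cTop a b)) (h.mp (h.thm (prv_k _ _)) ha))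
    (h.mp (h.thm (prv_k _ _)) hb)) (h.thm prv_top)

theorem Thy.ext {T : Set CForm} (h : Thy T) (a : CForm) : Thy {b | CForm.imp a b ∈ T} where
  thm hb := h.thm (prv_const _ hb)
  mp h1 h2 := h.mp (h.mp (h.thm (prv_s _ _ _)) h1) h2

theorem Thy.condExt {T : Set CForm} (h : Thy T) (a : CForm) : Thy {b | CForm.cond a b ∈ T} where
  thm hb := h.thm (prv_cond_nec _ hb)
  mp {b c} h1 h2 := by
    have h3 : CForm.cond a (.and (.imp b c) b) ∈ T :=
      h.mp (h.thm (prv_iff_mpr (prv_kc _ _ _))) (h.and_mem h1 h2)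
    exact h.mp (h.thm (prv_cond_mono a (prv_ev b c))) h3

structure PThy (T : Set CForm) : Prop extends Thy T where
  bot : CForm.bot ∉ T
  prime : ∀ {a b}, CForm.or a b ∈ T → a ∈ T ∨ b ∈ T

theorem prime_ext {T : Set CForm} (hT : Thy T) {c : CForm} (hc : c ∉ T) :
    ∃ M, PThy M ∧ T ⊆ M ∧ c ∉ M := by
  obtain ⟨M, hTM, hM⟩ := zorn_subset_nonempty {S | Thy S ∧ c ∉ S} (by
    intro C hC hch hne
    refine ⟨⋃₀ C, ⟨⟨?_, ?_⟩, ?_⟩, fun s hs => Set.subset_sUnion_of_mem hs⟩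
    · intro a ha
      obtain ⟨s, hs⟩ := hne
      exact ⟨s, hs, (hC hs).1.thm ha⟩
    · rintro a b ⟨s, hs, h1⟩ ⟨t, ht, h2⟩
      rcases hch.total hs ht with h | h
      · exact ⟨t, ht, (hC ht).1.mp (h h1) h2⟩
      · exact ⟨s, hs, (hC hs).1.mp h1 (h h2)⟩
    · rintro ⟨s, hs, h⟩
      exact (hC hs).2 h) T ⟨hT, hc⟩
  have hMt : Thy M := hM.prop.1
  have key : ∀ a, a ∉ M → CForm.imp a c ∈ M := by
    intro a ha
    by_contra hac
    have hsub : M ⊆ {b | CForm.imp a b ∈ M} := fun b hb => hMt.mp (hMt.thm (prv_k _ _)) hb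
    have := hM.le_of_ge (y := {b | CForm.imp a b ∈ M}) ⟨hMt.ext a, hac⟩ hsub
    exact ha (this (hMt.thm (prv_id a)))
  refine ⟨M, { hMt with bot := ?_, prime := ?_ }, hTM, hM.prop.2⟩
  · intro h
    exact hM.prop.2 (hMt.mp (hMt.thm (prv_efq c)) h)
  · intro a b hab
    by_contra! hn
    exact hM.prop.2 (hMt.mp (hMt.mp (hMt.mp (hMt.thm (prv_elim a b c)) (key a hn.1))
      (key b hn.2)) hab)

/-! ## The canonical frame -/

abbrev CanX : Type := {T : Set CForm // PThy T}

def ext (a : CForm) : Set CanX := {x | a ∈ x.1}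

theorem prv_of_ext {a b : CForm} (h : ext a ⊆ ext b) : Prv (.imp a b) := by
  by_contra hn
  have hT : Thy {c | Prv (.imp a c)} :=
    Thy.ext (T := {c | Prv c}) ⟨fun h => h, fun h1 h2 => ICK.mp h1 h2⟩ a
  obtain ⟨M, hM, hTM, hb⟩ := prime_ext hT (c := b) hn
  exact hb (h (show (⟨M, hM⟩ : CanX) ∈ ext a from hTM (prv_id a)))

def canR (s : Set CanX) (x y : CanX) : Prop :=
  ∃ a, s = ext a ∧ ∀ b, CForm.cond a b ∈ x.1 → b ∈ y.1

def canF (ne : Nonempty CanX) : CondFrame where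
  X := CanX
  ne := ne
  le x y := x.1 ⊆ y.1
  le_refl _ := subset_rfl
  le_trans _ _ _ h1 h2 := Set.Subset.trans h1 h2
  R := canR
  coh := by
    rintro s _ x y z hxy ⟨a, hs, h⟩
    exact ⟨z, ⟨a, hs, fun b hb => h b (hxy hb)⟩, subset_rfl⟩

theorem canR_ext (a : CForm) (x y : CanX) :
    canR (ext a) x y ↔ ∀ b, CForm.cond a b ∈ x.1 → b ∈ y.1 := by
  constructor
  · rintro ⟨d, hs, h⟩ b hb
    have h1 : Prv (cIff a d) := prv_and (prv_of_ext hs.le) (prv_of_ext hs.ge)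
    exact h b (x.2.mp (x.2.thm (prv_iff_mp (ICK.congL h1))) hb)
  · intro h
    exact ⟨a, rfl, h⟩

theorem truth (φ : CForm) :
    csat (fun x y : CanX => x.1 ⊆ y.1) canR (fun p => ext (.var p)) φ = ext φ := by
  induction φ with
  | var p => rfl
  | bot =>
    ext x
    exact ⟨fun h => h.elim, fun h => (x.2.bot h).elim⟩
  | and a b h1 h2 =>
    ext x
    simp only [csat, h1, h2]
    exact ⟨fun h => x.2.and_mem h.1 h.2,
      fun h => ⟨x.2.mp (x.2.thm (prv_fst _ _)) h, x.2.mp (x.2.thm (prv_snd _ _)) h⟩⟩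
  | or a b h1 h2 =>
    ext x
    simp only [csat, h1, h2]
    exact ⟨fun h => h.elim (x.2.mp (x.2.thm (prv_inl _ _))) (x.2.mp (x.2.thm (prv_inr _ _))),
      fun h => x.2.prime h⟩
  | imp a b h1 h2 =>
    ext x
    simp only [csat, h1, h2]
    constructor
    · intro h
      by_contra hn
      obtain ⟨M, hM, hTM, hb⟩ := prime_ext (x.2.toThy.ext a) (c := b) hn
      exact hb (h ⟨M, hM⟩ (fun c hc => hTM (x.2.mp (x.2.thm (prv_k _ _)) hc))
        (hTM (x.2.thm (prv_id a))))
    · intro h y hxy hy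
      exact y.2.mp (hxy h) hy
  | cond a b h1 h2 =>
    ext x
    simp only [csat, h1, h2, canR_ext]
    constructor
    · intro h
      by_contra hn
      obtain ⟨M, hM, hTM, hb⟩ := prime_ext (x.2.toThy.condExt a) (c := b) hn
      exact hb (h ⟨M, hM⟩ (fun c hc => hTM hc))
    · intro h y hy
      exact hy b h

theorem canR_str (x : CanX) (s : Set CanX) (y : CanX) (h : canR s x y) :
    x.1 ⊆ y.1 ∧ y ∈ s := by
  obtain ⟨a, rfl, h⟩ := h
  refine ⟨fun b hb => h b ?_, h a ?_⟩
  · exact x.2.mp (x.2.thm (prv_str a b)) (x.2.mp (x.2.thm (prv_k _ _)) hb)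
  · exact x.2.thm ((prv_str a a).mp (prv_id a))

/-- `ICK ⊕ ((p → q) → (p ⊳ q))` is sound and complete with
respect to conditional Kripke frames satisfying `R_a[x] ⊆ ↑x ∩ a` for all
worlds `x` and all upsets `a`. -/
theorem str_completeness (φ : CForm) :
    ICK {axStr} φ ↔
      ∀ F : CondFrame,
        (∀ (x : F.X) (a : Set F.X), IsUpset F.le a →
          ∀ y, F.R a x y → F.le x y ∧ y ∈ a) →
        F.valid φ := by
  refine ⟨fun h F hF => str_sound h F hF, fun h => ?_⟩
  by_contra hn
  obtain ⟨M, hM, -, hb⟩ := prime_ext (T := {c | Prv c})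
    ⟨fun h => h, fun h1 h2 => ICK.mp h1 h2⟩ hn
  have h1 := h (canF ⟨⟨M, hM⟩⟩) (fun x a _ y hy => canR_str x a y hy)
    (fun p => ext (.var p)) (fun p x y hxy hx => hxy hx) ⟨M, hM⟩
  exact hb ((truth φ).le h1)
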